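/- Let 0 ≤ k < d be integers with 2^{d−k} ≥ k, and let {x_u : u ∈ {0,1}^k} and {y_w : w ∈ {0,1,2}^k} be families of non-negative real numbers such that y_{u+v} ≥ x_u + x_v for all u, v ∈ {0,1}^k, and such that x_u ≥ x_v whenever v_i ≥ u_i for all i. Then Σ_{w ∈ {0,1,2}^k} y_w^{d−k} ≥ Σ_{s=0}^{k} D'_s X_s, where D'_0 = D_0 − 1, D'_1 = D_1 + 1, D'_2 = D_2 − 2^{d−k} + 1, and D'_s = D_s for all s ≥ 3. -/

import Mathlib

/-!
Put `n = d - k`. A vector `w ∈ {0,1,2}^k` splits as `w = ⌊w/2⌋ + ⌈w/2⌉`, with both summands in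
`{0,1}^k` and `⌊w/2⌋ ≤ ⌈w/2⌉`. Since `x` is decreasing, the elementary inequality
`a^n + (2^n - 1) b^n ≤ (a + b)^n` for `0 ≤ b ≤ a` (`pow_add_ge`) gives
`y_w^n ≥ x_{⌊w/2⌋}^n + (2^n - 1) x_{⌈w/2⌉}^n`. A given `u` equals `⌊w/2⌋` for `2^{k-|u|}` vectors
`w` and equals `⌈w/2⌉` for `2^{|u|}` of them (`sum_floor`, `sum_ceil`), so summing over `w` yields
`∑ D_s X_s`.

Passing from `D` to `D'` changes the right-hand side by `-X_0 + X_1 - (2^n - 1) X_2`. For a vector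
`w = e_i + e_j` with `i ≠ j` the bound above is `x_0^n + (2^n - 1) x_w^n`, and the summands
`(2^n - 1) x_w^n` over all such `w` make up `(2^n - 1) X_2`. It is thus enough to have
`y_w^n ≥ x_0^n` for these `w`, with a gain of `X_1 - X_0` for one of them. If `X_1 > X_0` then
`k ≥ 2`, and with `x_{e_i}`, `x_{e_j}` the two largest values on unit vectors the other splitting
gives `y_{e_i+e_j}^n ≥ x_{e_i}^n + (2^n - 1) x_{e_j}^n ≥ x_{e_i}^n + (k - 1) x_{e_j}^n ≥ X_1`.
-/

/-- The set `{0,1,…,n-1}^k` as a finset of functions `Fin k → ℕ`. -/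
def cube (k n : ℕ) : Finset (Fin k → ℕ) :=
  Fintype.piFinset fun _ => Finset.range n

/-- `D_s = 2^{k-s} + (2^{d-k} - 1) 2^s`. -/
noncomputable def Dcoef (d k s : ℕ) : ℝ :=
  2 ^ (k - s) + (2 ^ (d - k) - 1) * 2 ^ s

/-- The modified coefficients of Lemma 5: `D'_0 = D_0 - 1`, `D'_1 = D_1 + 1`,
`D'_2 = D_2 - 2^{d-k} + 1`, and `D'_s = D_s` for `s ≥ 3`. -/
noncomputable def Dcoef' (d k : ℕ) : ℕ → ℝ := fun s =>
  if s = 0 then Dcoef d k 0 - 1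
  else if s = 1 then Dcoef d k 1 + 1
  else if s = 2 then Dcoef d k 2 - 2 ^ (d - k) + 1
  else Dcoef d k s

/-- `X_s = ∑_{u ∈ {0,1}^k, |u| = s} x_u^{d-k}`. -/
noncomputable def Xsum (d k : ℕ) (x : (Fin k → ℕ) → ℝ) (s : ℕ) : ℝ :=
  ∑ u ∈ (cube k 2).filter (fun u => ∑ i, u i = s), x u ^ (d - k)

lemma pow_add_ge (a b : ℝ) (hb : 0 ≤ b) (hab : b ≤ a) (n : ℕ) :
    a ^ n + (2 ^ n - 1) * b ^ n ≤ (a + b) ^ n := by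
  induction n with
  | zero => simp
  | succ n ih =>
    have h1 : (a + b) * (a ^ n + (2 ^ n - 1) * b ^ n) ≤ (a + b) * (a + b) ^ n :=
      mul_le_mul_of_nonneg_left ih (by linarith)
    have hc : (0 : ℝ) ≤ 2 ^ n - 1 := by
      have := one_le_pow₀ (M₀ := ℝ) (a := 2) (by norm_num) (n := n)
      linarith
    have h2 : b * b ^ n ≤ b * a ^ n :=
      mul_le_mul_of_nonneg_left (pow_le_pow_left₀ hb hab n) hb
    have h3 : (2 ^ n - 1) * b ^ n * b ≤ (2 ^ n - 1) * b ^ n * a :=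
      mul_le_mul_of_nonneg_left hab (mul_nonneg hc (pow_nonneg hb n))
    simp only [pow_succ]
    nlinarith

lemma mem_cube {k n : ℕ} {w : Fin k → ℕ} : w ∈ cube k n ↔ ∀ i, w i < n := by
  simp [cube]

/-- Each `u ∈ {0,1}^k` is `⌊w/2⌋` for exactly `2^{k-|u|}` vectors `w ∈ {0,1,2}^k`. -/
lemma sum_floor {k : ℕ} (f : (Fin k → ℕ) → ℝ) :
    ∑ w ∈ cube k 3, f (fun i => w i / 2) = ∑ u ∈ cube k 2, 2 ^ (k - ∑ i, u i) * f u := by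
  rw [← Finset.sum_fiberwise_of_maps_to (s := cube k 3) (t := cube k 2)
    (g := fun w i => w i / 2)]
  · refine Finset.sum_congr rfl fun u hu => ?_
    rw [mem_cube] at hu
    have hfib : (cube k 3).filter (fun w => (fun i => w i / 2) = u)
        = Fintype.piFinset (fun i => if u i = 0 then {0, 1} else {2}) := by
      ext w
      simp only [Finset.mem_filter, mem_cube, Fintype.mem_piFinset, funext_iff, ← forall_and]
      refine forall_congr' fun i => ?_
      have := hu i
      split_ifs <;> simp <;> omega
    have hcard : (Fintype.piFinset (fun i => if u i = 0 then ({0, 1} : Finset ℕ) else {2})).card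
        = 2 ^ (k - ∑ i, u i) := by
      rw [Fintype.card_piFinset]
      have h1 : ∀ i, (if u i = 0 then ({0, 1} : Finset ℕ) else {2}).card = 2 ^ (1 - u i) := by
        intro i
        have := hu i
        obtain h | h : u i = 0 ∨ u i = 1 := by omega
        all_goals simp [h]
      have h2 : ∑ i, (1 - u i) = k - ∑ i, u i := by
        have h3 : ∑ i, (1 - u i) + ∑ i, u i = k := by
          rw [← Finset.sum_add_distrib, Finset.sum_congr rfl
            (fun i _ => Nat.sub_add_cancel (Nat.le_of_lt_succ (hu i)))]
          simp
        omega
      rw [Finset.prod_congr rfl (fun i _ => h1 i), Finset.prod_pow_eq_pow_sum, h2]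
    rw [Finset.sum_congr rfl (g := fun _ => f u)
      (fun w hw => by rw [(Finset.mem_filter.1 hw).2]), Finset.sum_const, hfib, hcard]
    simp
  · intro w hw
    rw [mem_cube] at hw ⊢
    intro i
    have := hw i
    omega

/-- Each `u ∈ {0,1}^k` is `⌈w/2⌉` for exactly `2^{|u|}` vectors `w ∈ {0,1,2}^k`. -/
lemma sum_ceil {k : ℕ} (f : (Fin k → ℕ) → ℝ) :
    ∑ w ∈ cube k 3, f (fun i => (w i + 1) / 2) = ∑ u ∈ cube k 2, 2 ^ (∑ i, u i) * f u := by
  rw [← Finset.sum_fiberwise_of_maps_to (s := cube k 3) (t := cube k 2)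
    (g := fun w i => (w i + 1) / 2)]
  · refine Finset.sum_congr rfl fun u hu => ?_
    rw [mem_cube] at hu
    have hfib : (cube k 3).filter (fun w => (fun i => (w i + 1) / 2) = u)
        = Fintype.piFinset (fun i => if u i = 0 then {0} else {1, 2}) := by
      ext w
      simp only [Finset.mem_filter, mem_cube, Fintype.mem_piFinset, funext_iff, ← forall_and]
      refine forall_congr' fun i => ?_
      have := hu i
      split_ifs <;> simp <;> omega
    have hcard : (Fintype.piFinset (fun i => if u i = 0 then ({0} : Finset ℕ) else {1, 2})).card
        = 2 ^ (∑ i, u i) := by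
      rw [Fintype.card_piFinset]
      have h1 : ∀ i, (if u i = 0 then ({0} : Finset ℕ) else {1, 2}).card = 2 ^ (u i) := by
        intro i
        have := hu i
        obtain h | h : u i = 0 ∨ u i = 1 := by omega
        all_goals simp [h]
      rw [Finset.prod_congr rfl (fun i _ => h1 i), Finset.prod_pow_eq_pow_sum]
    rw [Finset.sum_congr rfl (g := fun _ => f u)
      (fun w hw => by rw [(Finset.mem_filter.1 hw).2]), Finset.sum_const, hfib, hcard]
    simp
  · intro w hw
    rw [mem_cube] at hw ⊢
    intro i
    have := hw i
    omega

lemma Xsum_zero (d k : ℕ) (x : (Fin k → ℕ) → ℝ) : Xsum d k x 0 = x 0 ^ (d - k) := by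
  have h : (cube k 2).filter (fun u => ∑ i, u i = 0) = {0} := by
    ext u
    simp only [Finset.mem_filter, mem_cube, Finset.mem_singleton, Finset.sum_eq_zero_iff,
      Finset.mem_univ, true_implies, funext_iff, Pi.zero_apply]
    exact ⟨fun h => h.2, fun h => ⟨fun i => by simp [h i], h⟩⟩
  rw [Xsum, h, Finset.sum_singleton]

lemma Xsum_one (d k : ℕ) (x : (Fin k → ℕ) → ℝ) :
    Xsum d k x 1 = ∑ i, x (Pi.single i 1) ^ (d - k) := by
  have h : (cube k 2).filter (fun u => ∑ i, u i = 1)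
      = Finset.univ.image (fun i : Fin k => (Pi.single i 1 : Fin k → ℕ)) := by
    ext u
    simp only [Finset.mem_filter, mem_cube, Finset.mem_image, Finset.mem_univ, true_and]
    constructor
    · rintro ⟨-, hs⟩
      obtain ⟨i, -, hi⟩ := Finset.exists_ne_zero_of_sum_ne_zero
        (s := Finset.univ) (f := u) (by omega)
      have hsplit := Finset.add_sum_erase Finset.univ u (Finset.mem_univ i)
      have hz : ∑ j ∈ Finset.univ.erase i, u j = 0 := by omega
      refine ⟨i, funext fun j => ?_⟩
      by_cases hj : j = i
      · subst hj
        simp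
        omega
      · have := Finset.sum_eq_zero_iff.1 hz j (by simp [hj])
        simp [hj, this]
    · rintro ⟨i, rfl⟩
      refine ⟨fun j => ?_, by simp⟩
      by_cases hj : j = i
      · subst hj; simp
      · simp [hj]
  rw [Xsum, h, Finset.sum_image]
  intro i _ j _ hij
  by_contra hne
  have := congrFun hij i
  simp [hne] at this

/-- The change from `D_s` to `D'_s` in closed form, also when `k < 2` and `X_1` or `X_2` is an
empty sum. -/
lemma sum_Dcoef' (d k : ℕ) (x : (Fin k → ℕ) → ℝ) :
    ∑ s ∈ Finset.range (k + 1), Dcoef' d k s * Xsum d k x s =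
      ∑ u ∈ cube k 2, Dcoef d k (∑ i, u i) * x u ^ (d - k)
        - Xsum d k x 0 + Xsum d k x 1 - (2 ^ (d - k) - 1) * Xsum d k x 2 := by
  have h1 : ∑ s ∈ Finset.range (k + 1), Dcoef' d k s * Xsum d k x s
      = ∑ u ∈ cube k 2, Dcoef' d k (∑ i, u i) * x u ^ (d - k) := by
    rw [← Finset.sum_fiberwise_of_maps_to (s := cube k 2) (t := Finset.range (k + 1))
      (g := fun u => ∑ i, u i)]
    · refine Finset.sum_congr rfl fun s _ => ?_
      rw [Xsum, Finset.mul_sum]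
      refine Finset.sum_congr rfl fun u hu => ?_
      rw [(Finset.mem_filter.1 hu).2]
    · intro u hu
      rw [mem_cube] at hu
      rw [Finset.mem_range, Nat.lt_succ_iff]
      calc ∑ i, u i ≤ ∑ _i : Fin k, 1 :=
            Finset.sum_le_sum fun i _ => Nat.le_of_lt_succ (hu i)
        _ = k := by simp
  rw [h1]
  simp only [Xsum, Finset.sum_filter, Finset.mul_sum]
  rw [← Finset.sum_sub_distrib, ← Finset.sum_add_distrib, ← Finset.sum_sub_distrib]
  refine Finset.sum_congr rfl fun u _ => ?_
  generalize ∑ i, u i = s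
  rcases s with _ | _ | _ | s
  · simp [Dcoef']; ring
  · simp [Dcoef']; ring
  · simp [Dcoef']; ring
  · simp [Dcoef']

/-- `a i` and `a j` are the largest and the second largest value of the family `a`. -/
lemma exists_two_largest {k : ℕ} (hk : 2 ≤ k) (a : Fin k → ℝ) :
    ∃ i j, i ≠ j ∧ (∀ l, a l ≤ a i) ∧ ∀ l, l ≠ i → a l ≤ a j := by
  obtain ⟨i, -, hi⟩ := Finset.exists_max_image (Finset.univ : Finset (Fin k)) a
    ⟨⟨0, by omega⟩, Finset.mem_univ _⟩
  have hne : (Finset.univ.erase i).Nonempty := by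
    rw [← Finset.card_pos, Finset.card_erase_of_mem (Finset.mem_univ i)]
    simp
    omega
  obtain ⟨j, hj, hj'⟩ := Finset.exists_max_image (Finset.univ.erase i) a hne
  exact ⟨i, j, (Finset.ne_of_mem_erase hj).symm, fun l => hi l (Finset.mem_univ l),
    fun l hl => hj' l (by simp [hl])⟩

/-- Modified Strong Inequality (Lemma 5): for `0 ≤ k < d` with `2^{d-k} ≥ k`,
`∑_{w ∈ {0,1,2}^k} y_w^{d-k} ≥ ∑_{s=0}^k D'_s X_s`. -/
theorem stmt7 (d k : ℕ) (hkd : k < d) (hk2 : k ≤ 2 ^ (d - k))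
    (x y : (Fin k → ℕ) → ℝ)
    (hx : ∀ u, (∀ i, u i ≤ 1) → 0 ≤ x u)
    (hy : ∀ w, (∀ i, w i ≤ 2) → 0 ≤ y w)
    (hadd : ∀ u v : Fin k → ℕ, (∀ i, u i ≤ 1) → (∀ i, v i ≤ 1) →
      x u + x v ≤ y (u + v))
    (hmono : ∀ u v : Fin k → ℕ, (∀ i, u i ≤ 1) → (∀ i, v i ≤ 1) →
      (∀ i, u i ≤ v i) → x v ≤ x u) :
    ∑ w ∈ cube k 3, y w ^ (d - k) ≥
      ∑ s ∈ Finset.range (k + 1), Dcoef' d k s * Xsum d k x s := by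
  set n := d - k with hn
  have hc : (0 : ℝ) ≤ 2 ^ n - 1 := by
    have := one_le_pow₀ (M₀ := ℝ) (a := 2) (by norm_num) (n := n)
    linarith
  have hsingle : ∀ i l : Fin k, (Pi.single i 1 : Fin k → ℕ) l ≤ 1 := by
    intro i l
    by_cases h : l = i
    · subst h; simp
    · simp [h]
  have hle3 : ∀ w ∈ cube k 3, ∀ i, w i ≤ 2 := fun w hw i =>
    Nat.le_of_lt_succ (mem_cube.1 hw i)
  have hL : ∀ w ∈ cube k 3, x (fun i => w i / 2) ^ n
      + (2 ^ n - 1) * x (fun i => (w i + 1) / 2) ^ n ≤ y w ^ n := by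
    intro w hw
    have h2 := hle3 w hw
    have hB : ∀ i, w i / 2 ≤ 1 := fun i => by have := h2 i; omega
    have hA : ∀ i, (w i + 1) / 2 ≤ 1 := fun i => by have := h2 i; omega
    have hsum : (fun i => w i / 2) + (fun i => (w i + 1) / 2) = w := by
      funext i
      simp only [Pi.add_apply]
      omega
    have h := hadd (fun i => w i / 2) (fun i => (w i + 1) / 2) hB hA
    rw [hsum] at h
    refine (pow_add_ge _ _ (hx _ hA) (hmono _ _ hB hA fun i => ?_) n).trans
      (pow_le_pow_left₀ (add_nonneg (hx _ hB) (hx _ hA)) h n)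
    omega
  have hLsum : ∑ w ∈ cube k 3, (x (fun i => w i / 2) ^ n
      + (2 ^ n - 1) * x (fun i => (w i + 1) / 2) ^ n)
      = ∑ u ∈ cube k 2, Dcoef d k (∑ i, u i) * x u ^ n := by
    rw [Finset.sum_add_distrib, ← Finset.mul_sum, sum_floor (fun u => x u ^ n),
      sum_ceil (fun u => x u ^ n), Finset.mul_sum, ← Finset.sum_add_distrib]
    refine Finset.sum_congr rfl fun u _ => ?_
    rw [Dcoef]
    ring
  set P := (cube k 2).filter (fun u => ∑ i, u i = 2) with hP
  have hPle : ∀ w ∈ P, ∀ i, w i ≤ 1 := fun w hw i =>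
    Nat.le_of_lt_succ (mem_cube.1 (Finset.mem_filter.1 hw).1 i)
  have hPsub : P ⊆ cube k 3 := fun w hw =>
    mem_cube.2 fun i => by have := hPle w hw i; omega
  have hPfloor : ∀ w ∈ P, x (fun i => w i / 2) = x 0 := by
    intro w hw
    congr 1
    funext i
    have := hPle w hw i
    simp only [Pi.zero_apply]
    omega
  have hPceil : ∀ w ∈ P, x (fun i => (w i + 1) / 2) = x w := by
    intro w hw
    congr 1
    funext i
    have := hPle w hw i
    omega
  have hPy : ∀ w ∈ P, x 0 ^ n ≤ y w ^ n := by
    intro w hw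
    have h := hL w (hPsub hw)
    rw [hPfloor w hw, hPceil w hw] at h
    have := mul_nonneg hc (pow_nonneg (hx w (hPle w hw)) n)
    linarith
  have hx0 : 0 ≤ x 0 := hx 0 (by simp)
  have hP1 : Xsum d k x 1 - Xsum d k x 0 ≤ ∑ w ∈ P, (y w ^ n - x 0 ^ n) := by
    have hnn : ∀ w ∈ P, 0 ≤ y w ^ n - x 0 ^ n := fun w hw => sub_nonneg.2 (hPy w hw)
    rw [Xsum_zero, Xsum_one, ← hn]
    by_cases hk : 2 ≤ k
    · obtain ⟨i, j, hij, hi, hj⟩ := exists_two_largest hk (fun i => x (Pi.single i 1))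
      have hw0 : (Pi.single i 1 + Pi.single j 1 : Fin k → ℕ) ∈ P := by
        rw [hP, Finset.mem_filter, mem_cube]
        refine ⟨fun l => ?_, by simp [Finset.sum_add_distrib]⟩
        simp only [Pi.add_apply]
        by_cases hl : l = i
        · subst hl; simp [hij]
        · have := hsingle j l
          simp [hl]
          omega
      refine le_trans ?_ (Finset.single_le_sum hnn hw0)
      have hxj := hx _ (hsingle j)
      have hxi := hx _ (hsingle i)
      have h1 := (pow_add_ge _ _ hxj (hi j) n).trans (pow_le_pow_left₀ (add_nonneg hxi hxj)
        (hadd _ _ (hsingle i) (hsingle j)) n)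
      have h2 : ∑ l ∈ Finset.univ.erase i, x (Pi.single l 1) ^ n
          ≤ ((k : ℝ) - 1) * x (Pi.single j 1) ^ n := by
        refine (Finset.sum_le_card_nsmul _ _ (x (Pi.single j 1) ^ n) fun l hl => ?_).trans_eq ?_
        · exact pow_le_pow_left₀ (hx _ (hsingle l)) (hj l (Finset.ne_of_mem_erase hl)) n
        · rw [Finset.card_erase_of_mem (Finset.mem_univ i), nsmul_eq_mul, Finset.card_univ,
            Fintype.card_fin, Nat.cast_sub (by omega), Nat.cast_one]
      have h3 : ((k : ℝ) - 1) * x (Pi.single j 1) ^ n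
          ≤ (2 ^ n - 1) * x (Pi.single j 1) ^ n := by
        refine mul_le_mul_of_nonneg_right ?_ (pow_nonneg hxj n)
        have : (k : ℝ) ≤ 2 ^ n := by exact_mod_cast hk2
        linarith
      rw [← Finset.add_sum_erase _ _ (Finset.mem_univ i)]
      linarith
    · refine le_trans ?_ (Finset.sum_nonneg hnn)
      have hpow := pow_nonneg hx0 n
      have h1 : ∑ l : Fin k, x (Pi.single l 1) ^ n ≤ (k : ℝ) * x 0 ^ n := by
        refine (Finset.sum_le_card_nsmul _ _ (x 0 ^ n) fun l _ => ?_).trans_eq (by simp)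
        exact pow_le_pow_left₀ (hx _ (hsingle l))
          (hmono _ _ (by simp) (hsingle l) (by simp)) n
      have hk1 : (k : ℝ) ≤ 1 := by exact_mod_cast (by omega : k ≤ 1)
      nlinarith
  have hgain : ∑ w ∈ P, (y w ^ n - x 0 ^ n) - (2 ^ n - 1) * Xsum d k x 2
      ≤ ∑ w ∈ cube k 3, (y w ^ n - (x (fun i => w i / 2) ^ n
      + (2 ^ n - 1) * x (fun i => (w i + 1) / 2) ^ n)) := by
    refine le_trans (le_of_eq ?_) (Finset.sum_le_sum_of_subset_of_nonneg hPsub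
      fun w hw _ => sub_nonneg.2 (hL w hw))
    rw [Xsum, ← hn, ← hP, Finset.mul_sum, ← Finset.sum_sub_distrib]
    refine Finset.sum_congr rfl fun w hw => ?_
    rw [hPfloor w hw, hPceil w hw]
    ring
  rw [Finset.sum_sub_distrib (s := cube k 3), hLsum] at hgain
  rw [sum_Dcoef', ← hn]
  linarith
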